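/- Define t_n(x) = Σ_{k=0}^n C(n,k)*C(x,k)*C(x+k,k)*2^k. For any odd prime p and p-adic integer x with 2x ≡ −1 (mod p), one has Σ_{n=0}^{p-1} t_n(x)^2 ≡ (−1/p) (mod p^2), where (−1/p) is the Legendre symbol, i.e. (−1)^((p−1)/2). -/

import Mathlib

/-- Generalized binomial coefficient `C(x, k) = x(x-1)⋯(x-k+1)/k!` in `ℚ_[p]`. -/
noncomputable def gbinom {p : ℕ} [Fact p.Prime] (x : ℚ_[p]) (k : ℕ) : ℚ_[p] :=
  (∏ i ∈ Finset.range k, (x - i)) / (k.factorial : ℚ_[p])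

/-- The sequence `t_n(x) = ∑_{k=0}^n C(n,k) C(x,k) C(x+k,k) 2^k`. -/
noncomputable def tseq {p : ℕ} [Fact p.Prime] (x : ℚ_[p]) (n : ℕ) : ℚ_[p] :=
  ∑ k ∈ Finset.range (n+1), (n.choose k : ℚ_[p]) * gbinom x k * gbinom (x + (k : ℚ_[p])) k * 2^k

/-! Write `p = 2m + 1`. Since `4 (x (x + 1) - m (m + 1)) = (2x + 1)² - p²`, and since
`C(x, k) C(x + k, k)` is a polynomial in `x (x + 1)` that is `p`-integral for `k < p`, we have
`t_n(x) ≡ t_n(m)` modulo `p²`. Expand `∑_{n < p} t_n(m)²` and use that, for `k + l < p`,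
`∑_{n < p} C(n, k) C(n, l) ≡ p ∫₀¹ (-v) ^ k (v - 1) ^ l dv` modulo `p²`. Because
`∑_k C(m, k) C(m + k, k) 2 ^ k (-v) ^ k = P_m(2v)` for the shifted Legendre polynomial `P_m`, the
sum is congruent to `p ∫₀¹ P_m(2v) P_m(2 - 2v) dv`. The substitution `u = 2v` and the symmetry
`u ↦ 2 - u` turn this into `p ∫₀¹ P_m(u) P_m(2 - u) du`. By orthogonality only the leading
coefficient of `P_m(2 - u)` matters, and the value is `p (-1) ^ m / (2m + 1) = (-1) ^ m`. -/

open Polynomial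

/-- The value at `C(X, k) C(X, l)` of the umbral functional `X ^ j ↦ B_j` (Bernoulli numbers with
`B_1 = -1/2`). It governs both `∑_{n < p} C(n, k) C(n, l)` modulo `p ^ 2` and the beta integral
`∫₀¹ (-v) ^ k (v - 1) ^ l dv`. -/
def chooseMoment (k l : ℕ) : ℚ :=
  (-1) ^ (k + l) * (k.factorial * l.factorial) / (k + l + 1).factorial

lemma chooseMoment_zero_right (k : ℕ) : chooseMoment k 0 = (-1) ^ k / (k + 1) := by
  have : (k.factorial : ℚ) ≠ 0 := mod_cast k.factorial_ne_zero
  simp only [chooseMoment, add_zero, Nat.factorial_succ, Nat.factorial_zero]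
  push_cast
  field_simp

lemma chooseMoment_succ_right (k l : ℕ) :
    chooseMoment k (l + 1) = -chooseMoment (k + 1) l - chooseMoment k l := by
  have : ((k + l + 1).factorial : ℚ) ≠ 0 := mod_cast (k + l + 1).factorial_ne_zero
  simp only [chooseMoment, Nat.add_right_comm k 1 l, ← add_assoc, Nat.factorial_succ]
  push_cast
  field_simp
  ring

lemma integral_neg_pow_mul_sub_one_pow (k l : ℕ) :
    ∫ v in (0 : ℝ)..1, (-v) ^ k * (v - 1) ^ l = chooseMoment k l := by
  induction l generalizing k with
  | zero =>
    simp only [pow_zero, mul_one, chooseMoment_zero_right]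
    rw [intervalIntegral.integral_comp_neg (· ^ k), integral_pow]
    push_cast
    simp [pow_succ]
  | succ l ih =>
    have split (v : ℝ) : (-v) ^ k * (v - 1) ^ (l + 1) =
        -((-v) ^ (k + 1) * (v - 1) ^ l) - (-v) ^ k * (v - 1) ^ l := by ring
    simp only [split]
    rw [intervalIntegral.integral_sub (Continuous.intervalIntegrable (by fun_prop) _ _)
      (Continuous.intervalIntegrable (by fun_prop) _ _), intervalIntegral.integral_neg, ih, ih,
      chooseMoment_succ_right]
    push_cast
    rfl

lemma integral_comp_two_mul_of_symm {E : Type*} [NormedAddCommGroup E] [NormedSpace ℝ E]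
    {f : ℝ → E} (hf : Continuous f) (hsymm : ∀ u, f (2 - u) = f u) :
    ∫ v in (0 : ℝ)..1, f (2 * v) = ∫ u in (0 : ℝ)..1, f u := by
  have reflect : ∫ u in (1 : ℝ)..2, f u = ∫ u in (0 : ℝ)..1, f u := by
    have := intervalIntegral.integral_comp_sub_left f (a := 0) (b := 1) 2
    norm_num [hsymm] at this
    exact this.symm
  rw [intervalIntegral.integral_comp_mul_left f two_ne_zero, mul_zero, mul_one,
    ← intervalIntegral.integral_add_adjacent_intervals (hf.intervalIntegrable 0 1)
      (hf.intervalIntegrable 1 2), reflect, ← two_smul ℝ, inv_smul_smul₀ two_ne_zero]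

lemma eval_iterate_derivative_eq_zero {R : Type*} [CommRing R] {F : R[X]} {a : R} {m : ℕ}
    (h : (X - C a) ^ (m + 1) ∣ F) : (derivative^[m] F).eval a = 0 :=
  dvd_iff_isRoot.1 (by simpa using pow_sub_dvd_iterate_derivative_of_pow_dvd m h)

lemma integral_mul_iterate_derivative {F : ℝ[X]} {a b : ℝ} {m : ℕ} (ha : (X - C a) ^ m ∣ F)
    (hb : (X - C b) ^ m ∣ F) (g : ℝ[X]) :
    ∫ u in a..b, g.eval u * (derivative^[m] F).eval u =
      (-1) ^ m * ∫ u in a..b, (derivative^[m] g).eval u * F.eval u := by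
  induction m generalizing g with
  | zero => simp
  | succ m ih =>
    have by_parts := intervalIntegral.integral_mul_deriv_eq_deriv_mul (a := a) (b := b)
      (fun u _ ↦ g.hasDerivAt u) (fun u _ ↦ (derivative^[m] F).hasDerivAt u)
      (Continuous.intervalIntegrable (by fun_prop) _ _)
      (Continuous.intervalIntegrable (by fun_prop) _ _)
    rw [eval_iterate_derivative_eq_zero ha, eval_iterate_derivative_eq_zero hb, mul_zero, mul_zero,
      sub_zero, zero_sub] at by_parts
    rw [Function.iterate_succ_apply' derivative m F, by_parts, Function.iterate_succ_apply,
      ih ((pow_dvd_pow _ m.le_succ).trans ha) ((pow_dvd_pow _ m.le_succ).trans hb) (derivative g),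
      pow_succ', mul_assoc, neg_one_mul]

lemma iterate_derivative_eq_C_of_natDegree_le {R : Type*} [Semiring R] {g : R[X]} {m : ℕ}
    (hg : g.natDegree ≤ m) : derivative^[m] g = C (m.factorial * g.coeff m) := by
  ext n
  rcases n.eq_zero_or_pos with rfl | hn
  · simp [coeff_iterate_derivative, Nat.descFactorial_self]
  · rw [coeff_iterate_derivative, coeff_C_of_ne_zero hn.ne',
      coeff_eq_zero_of_natDegree_lt (by omega), smul_zero]

/-- The shifted Legendre polynomial with real coefficients. -/
noncomputable def realShiftedLegendre (m : ℕ) : ℝ[X] :=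
  (shiftedLegendre m).map (Int.castRingHom ℝ)

lemma coeff_realShiftedLegendre (m k : ℕ) :
    (realShiftedLegendre m).coeff k = (-1) ^ k * m.choose k * (m + k).choose k := by
  simp [realShiftedLegendre, coeff_shiftedLegendre, m.choose_symm_add (b := k)]

lemma natDegree_realShiftedLegendre (m : ℕ) : (realShiftedLegendre m).natDegree = m := by
  rw [realShiftedLegendre, natDegree_map_eq_of_injective (RingHom.injective_int _),
    natDegree_shiftedLegendre]

lemma factorial_mul_realShiftedLegendre (m : ℕ) :
    (m.factorial : ℝ[X]) * realShiftedLegendre m = derivative^[m] (X ^ m * (1 - X) ^ m) := by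
  simpa [realShiftedLegendre, ← iterate_derivative_map] using
    congrArg (map (Int.castRingHom ℝ)) (factorial_mul_shiftedLegendre_eq m)

lemma integral_mul_realShiftedLegendre {m : ℕ} {g : ℝ[X]} (hg : g.natDegree ≤ m) :
    ∫ u in (0 : ℝ)..1, g.eval u * (realShiftedLegendre m).eval u =
      (-1) ^ m * g.coeff m * chooseMoment m m := by
  have dvd_zero : (X - C (0 : ℝ)) ^ m ∣ X ^ m * (1 - X) ^ m := by simp
  have dvd_one : (X - C (1 : ℝ)) ^ m ∣ X ^ m * (1 - X) ^ m := by
    rw [C_1, ← neg_sub (1 : ℝ[X]) X, neg_pow, (isUnit_one.neg.pow m).mul_left_dvd]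
    exact dvd_mul_left _ _
  have moment : ∫ u in (0 : ℝ)..1, (X ^ m * (1 - X) ^ m : ℝ[X]).eval u = chooseMoment m m := by
    rw [← integral_neg_pow_mul_sub_one_pow]
    congr 1 with u
    simp only [eval_mul, eval_pow, eval_sub, eval_X, eval_one, ← mul_pow]
    ring
  have by_parts := integral_mul_iterate_derivative dvd_zero dvd_one g
  simp only [← factorial_mul_realShiftedLegendre, iterate_derivative_eq_C_of_natDegree_le hg,
    eval_natCast_mul, eval_C, mul_left_comm (eval _ g), intervalIntegral.integral_const_mul,
    moment] at by_parts
  refine mul_left_cancel₀ (Nat.cast_ne_zero.2 m.factorial_ne_zero : (m.factorial : ℝ) ≠ 0) ?_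
  rw [by_parts]
  ring

lemma integral_comp_two_sub_mul_realShiftedLegendre (m : ℕ) :
    ∫ u in (0 : ℝ)..1, (realShiftedLegendre m).eval (2 - u) * (realShiftedLegendre m).eval u =
      (-1) ^ m / (2 * m + 1) := by
  set P := realShiftedLegendre m with hP
  have hdeg : (2 - X : ℝ[X]).natDegree = 1 := by
    rw [natDegree_sub_eq_right_of_natDegree_lt] <;> simp
  have hlead : (2 - X : ℝ[X]).leadingCoeff = -1 := by
    rw [leadingCoeff, hdeg]
    simp
  have hcomp : (P.comp (2 - X)).natDegree = m := by
    rw [natDegree_comp, hdeg, natDegree_realShiftedLegendre, mul_one]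
  have hcoeff : (P.comp (2 - X)).coeff m = (m + m).choose m := by
    have h := leadingCoeff_comp (p := P) (hdeg.trans_ne one_ne_zero)
    rw [leadingCoeff, hcomp] at h
    rw [h, hlead, leadingCoeff, natDegree_realShiftedLegendre, coeff_realShiftedLegendre,
      m.choose_self, Nat.cast_one, mul_one, mul_right_comm, ← mul_pow, neg_one_mul, neg_neg,
      one_pow, one_mul]
  have hint := integral_mul_realShiftedLegendre hcomp.le
  simp only [eval_comp, eval_sub, eval_ofNat, eval_X, hcoeff, ← hP] at hint
  have hm : (m.factorial : ℝ) ≠ 0 := mod_cast m.factorial_ne_zero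
  have hmm : ((m + m).factorial : ℝ) ≠ 0 := mod_cast (m + m).factorial_ne_zero
  rw [hint, chooseMoment, Nat.cast_add_choose, Nat.factorial_succ, ← two_mul]
  rw [← two_mul] at hmm
  push_cast
  rw [pow_mul, neg_one_sq, one_pow]
  field_simp

/-- The coefficient of `C(n, k)` in `t_n(m)`, which is also the coefficient of `(-v) ^ k` in the
shifted Legendre polynomial `P_m(2v)`. -/
def tCoeff (m k : ℕ) : ℕ := m.choose k * (m + k).choose k * 2 ^ k

lemma eval_two_mul_realShiftedLegendre (m : ℕ) (v : ℝ) :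
    (realShiftedLegendre m).eval (2 * v) = ∑ k ∈ Finset.range (m + 1), tCoeff m k * (-v) ^ k := by
  rw [eval_eq_sum_range, natDegree_realShiftedLegendre]
  refine Finset.sum_congr rfl fun k _ ↦ ?_
  rw [coeff_realShiftedLegendre, tCoeff, neg_pow v, mul_pow]
  push_cast
  ring

lemma integral_eval_two_mul_realShiftedLegendre (m : ℕ) :
    ∫ v in (0 : ℝ)..1,
      (realShiftedLegendre m).eval (2 - 2 * v) * (realShiftedLegendre m).eval (2 * v) =
    ∑ k ∈ Finset.range (m + 1), ∑ l ∈ Finset.range (m + 1),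
      tCoeff m k * tCoeff m l * (chooseMoment k l : ℝ) := by
  have expand (v : ℝ) :
      (realShiftedLegendre m).eval (2 - 2 * v) * (realShiftedLegendre m).eval (2 * v) =
      ∑ k ∈ Finset.range (m + 1), ∑ l ∈ Finset.range (m + 1),
        tCoeff m k * tCoeff m l * ((-v) ^ k * (v - 1) ^ l) := by
    rw [show 2 - 2 * v = 2 * (1 - v) by ring, eval_two_mul_realShiftedLegendre,
      eval_two_mul_realShiftedLegendre, neg_sub, mul_comm, Finset.sum_mul_sum]
    refine Finset.sum_congr rfl fun k _ ↦ Finset.sum_congr rfl fun l _ ↦ ?_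
    ring
  simp only [expand]
  rw [intervalIntegral.integral_finsetSum
    fun _ _ ↦ Continuous.intervalIntegrable (by fun_prop) _ _]
  refine Finset.sum_congr rfl fun k _ ↦ ?_
  rw [intervalIntegral.integral_finsetSum
    fun _ _ ↦ Continuous.intervalIntegrable (by fun_prop) _ _]
  simp only [intervalIntegral.integral_const_mul, integral_neg_pow_mul_sub_one_pow]

lemma sum_tCoeff_mul_chooseMoment (m : ℕ) :
    ∑ k ∈ Finset.range (m + 1), ∑ l ∈ Finset.range (m + 1),
      tCoeff m k * tCoeff m l * chooseMoment k l = (-1) ^ m / (2 * m + 1) := by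
  have unfold_interval := integral_comp_two_mul_of_symm
    (f := fun u ↦ (realShiftedLegendre m).eval (2 - u) * (realShiftedLegendre m).eval u)
    (by fun_prop) fun u ↦ by rw [sub_sub_cancel, mul_comm]
  rw [integral_eval_two_mul_realShiftedLegendre, integral_comp_two_sub_mul_realShiftedLegendre]
    at unfold_interval
  exact_mod_cast unfold_interval

lemma sum_range_choose_right (N k : ℕ) : ∑ n ∈ Finset.range N, n.choose k = N.choose (k + 1) := by
  induction N with
  | zero => simp
  | succ N ih => rw [Finset.sum_range_succ, ih, add_comm, Nat.choose_succ_succ]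

-- Each increment of `N ↦ C(N, k + 1) C(N, l + 1)` is a sum of three products, by Pascal's rule.
lemma choose_succ_mul_choose_succ_eq_sum (N k l : ℕ) :
    N.choose (k + 1) * N.choose (l + 1) =
      ∑ n ∈ Finset.range N, n.choose k * n.choose (l + 1) +
        ∑ n ∈ Finset.range N, n.choose (k + 1) * n.choose l +
        ∑ n ∈ Finset.range N, n.choose k * n.choose l := by
  induction N with
  | zero => simp
  | succ N ih =>
    simp only [Finset.sum_range_succ, Nat.choose_succ_succ N]
    linear_combination ih

lemma ultrametric_norm_add_le {E : Type*} [SeminormedAddGroup E] [IsUltrametricDist E] {a b : E}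
    {r : ℝ} (ha : ‖a‖ ≤ r) (hb : ‖b‖ ≤ r) : ‖a + b‖ ≤ r :=
  (IsUltrametricDist.norm_add_le_max a b).trans (max_le ha hb)

lemma ultrametric_norm_sub_le {E : Type*} [SeminormedAddGroup E] [IsUltrametricDist E] {a b : E}
    {r : ℝ} (ha : ‖a‖ ≤ r) (hb : ‖b‖ ≤ r) : ‖a - b‖ ≤ r := by
  rw [sub_eq_add_neg]
  exact ultrametric_norm_add_le ha (by rwa [norm_neg])

lemma norm_prod_sub_prod_le {ι K : Type*} [NormedCommRing K] [NormOneClass K]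
    [IsUltrametricDist K] {s : Finset ι} {f g : ι → K} {r : ℝ} (hr : 0 ≤ r)
    (hf : ∀ i ∈ s, ‖f i‖ ≤ 1) (hg : ∀ i ∈ s, ‖g i‖ ≤ 1) (h : ∀ i ∈ s, ‖f i - g i‖ ≤ r) :
    ‖∏ i ∈ s, f i - ∏ i ∈ s, g i‖ ≤ r := by
  classical
  induction s using Finset.induction_on with
  | empty => simpa using hr
  | insert a s ha ih =>
    rw [Finset.forall_mem_insert] at hf hg h
    have hprod : ‖∏ i ∈ s, f i‖ ≤ 1 :=
      (s.norm_prod_le f).trans (Finset.prod_le_one (fun _ _ ↦ norm_nonneg _) hf.2)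
    have telescope : f a * ∏ i ∈ s, f i - g a * ∏ i ∈ s, g i =
        (f a - g a) * ∏ i ∈ s, f i + g a * (∏ i ∈ s, f i - ∏ i ∈ s, g i) := by ring
    rw [Finset.prod_insert ha, Finset.prod_insert ha, telescope]
    refine ultrametric_norm_add_le ?_ ?_
    · simpa using norm_mul_le_of_le h.1 hprod
    · simpa using norm_mul_le_of_le hg.1 (ih hf.2 hg.2 h.2)

lemma norm_sq_sub_sq_le {K : Type*} [SeminormedCommRing K] [IsUltrametricDist K] {a b : K} {r : ℝ}
    (ha : ‖a‖ ≤ 1) (hb : ‖b‖ ≤ 1) (h : ‖a - b‖ ≤ r) : ‖a ^ 2 - b ^ 2‖ ≤ r := by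
  rw [sq_sub_sq]
  have hab : ‖a + b‖ ≤ 1 := ultrametric_norm_add_le ha hb
  simpa using norm_mul_le_of_le hab h

section Padic

variable {p : ℕ} [Fact p.Prime]

lemma norm_mul_le_zpow_neg_two {a b : ℚ_[p]} (ha : ‖a‖ ≤ (p : ℝ)⁻¹) (hb : ‖b‖ ≤ (p : ℝ)⁻¹) :
    ‖a * b‖ ≤ (p : ℝ) ^ (-2 : ℤ) := by
  rw [zpow_neg, zpow_ofNat, ← inv_pow, sq]
  exact norm_mul_le_of_le ha hb

lemma norm_natCast_eq_one_of_lt {n : ℕ} (h0 : n ≠ 0) (hn : n < p) : ‖(n : ℚ_[p])‖ = 1 :=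
  Padic.norm_natCast_eq_one_iff.2 (Nat.coprime_of_lt_prime h0 hn Fact.out)

lemma norm_factorial_eq_one {k : ℕ} (hk : k < p) : ‖(k.factorial : ℚ_[p])‖ = 1 :=
  Padic.norm_natCast_eq_one_iff.2 ((Fact.out : p.Prime).coprime_factorial_of_lt hk)

lemma norm_choose_prime_le {k : ℕ} (h0 : k ≠ 0) (hk : k < p) :
    ‖(p.choose k : ℚ_[p])‖ ≤ (p : ℝ)⁻¹ := by
  obtain ⟨c, hc⟩ := (Fact.out : p.Prime).dvd_choose_self h0 hk
  rw [hc, Nat.cast_mul, norm_mul, Padic.norm_p]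
  exact mul_le_of_le_one_right (by positivity) (IsUltrametricDist.norm_natCast_le_one _ c)

lemma norm_choose_prime_sub_one_sub_le {k : ℕ} (hk : k < p) :
    ‖((p - 1).choose k : ℚ_[p]) - (-1) ^ k‖ ≤ (p : ℝ)⁻¹ := by
  induction k with
  | zero => simp
  | succ k ih =>
    have pascal : (p.choose (k + 1) : ℚ_[p]) = (p - 1).choose k + (p - 1).choose (k + 1) := by
      rw [Nat.choose_eq_choose_pred_add (by omega) k.succ_pos]
      push_cast
      rfl
    have decompose : ((p - 1).choose (k + 1) : ℚ_[p]) - (-1) ^ (k + 1) =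
        p.choose (k + 1) - ((p - 1).choose k - (-1) ^ k) := by
      rw [pascal]
      ring
    rw [decompose]
    exact ultrametric_norm_sub_le (norm_choose_prime_le k.succ_ne_zero hk) (ih (by omega))

lemma norm_choose_prime_succ_sub_le (hp : p ≠ 2) {k : ℕ} (hk : k < p) :
    ‖(p.choose (k + 1) : ℚ_[p]) - p * ((-1) ^ k / (k + 1))‖ ≤ (p : ℝ) ^ (-2 : ℤ) := by
  obtain hk | rfl : k + 1 < p ∨ p = k + 1 := by omega
  · have absorb : (p : ℚ_[p]) * (p - 1).choose k = p.choose (k + 1) * (k + 1) := by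
      have := Nat.add_one_mul_choose_eq (p - 1) k
      rw [Nat.sub_add_cancel (by omega)] at this
      exact_mod_cast this
    have hunit : ‖(k : ℚ_[p]) + 1‖ = 1 := mod_cast norm_natCast_eq_one_of_lt k.succ_ne_zero hk
    have hne : (k : ℚ_[p]) + 1 ≠ 0 := norm_ne_zero_iff.1 (hunit.trans_ne one_ne_zero)
    have factor : (p.choose (k + 1) : ℚ_[p]) - p * ((-1) ^ k / (k + 1)) =
        p * ((p - 1).choose k - (-1) ^ k) / (k + 1) := by
      field_simp
      linear_combination -absorb
    rw [factor, norm_div, hunit, div_one]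
    exact norm_mul_le_zpow_neg_two Padic.norm_p.le (norm_choose_prime_sub_one_sub_le (by omega))
  · have heven : Even k := by
      simpa [Nat.even_add_one, Nat.odd_add_one] using (Fact.out : (k + 1).Prime).odd_of_ne_two hp
    have hne : (k : ℚ_[k + 1]) + 1 ≠ 0 := mod_cast k.succ_ne_zero
    rw [heven.neg_one_pow, Nat.choose_self]
    push_cast
    rw [mul_one_div_cancel hne, sub_self, norm_zero]
    positivity

lemma norm_sum_choose_mul_choose_sub_le (hp : p ≠ 2) {k l : ℕ} (hkl : k + l < p) :
    ‖∑ n ∈ Finset.range p, (n.choose k * n.choose l : ℚ_[p]) - p * chooseMoment k l‖ ≤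
      (p : ℝ) ^ (-2 : ℤ) := by
  induction l generalizing k with
  | zero =>
    have hockey : ∑ n ∈ Finset.range p, (n.choose k : ℚ_[p]) = p.choose (k + 1) :=
      mod_cast sum_range_choose_right p k
    simpa [chooseMoment_zero_right, hockey] using norm_choose_prime_succ_sub_le hp hkl
  | succ l ih =>
    have hsum : (p.choose (k + 1) * p.choose (l + 1) : ℚ_[p]) =
        ∑ n ∈ Finset.range p, (n.choose k * n.choose (l + 1) : ℚ_[p]) +
          ∑ n ∈ Finset.range p, (n.choose (k + 1) * n.choose l : ℚ_[p]) +
          ∑ n ∈ Finset.range p, (n.choose k * n.choose l : ℚ_[p]) :=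
      mod_cast choose_succ_mul_choose_succ_eq_sum p k l
    have hmoment : (chooseMoment k (l + 1) : ℚ_[p]) =
        -chooseMoment (k + 1) l - chooseMoment k l := mod_cast chooseMoment_succ_right k l
    have hchoose : ‖(p.choose (k + 1) * p.choose (l + 1) : ℚ_[p])‖ ≤ (p : ℝ) ^ (-2 : ℤ) :=
      norm_mul_le_zpow_neg_two (norm_choose_prime_le k.succ_ne_zero (by omega))
        (norm_choose_prime_le l.succ_ne_zero (by omega))
    have decompose : ∑ n ∈ Finset.range p, (n.choose k * n.choose (l + 1) : ℚ_[p]) -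
        p * chooseMoment k (l + 1) = p.choose (k + 1) * p.choose (l + 1) -
          (∑ n ∈ Finset.range p, (n.choose (k + 1) * n.choose l : ℚ_[p]) -
            p * chooseMoment (k + 1) l) -
          (∑ n ∈ Finset.range p, (n.choose k * n.choose l : ℚ_[p]) - p * chooseMoment k l) := by
      rw [hsum, hmoment]
      ring
    rw [decompose]
    exact ultrametric_norm_sub_le (ultrametric_norm_sub_le hchoose (ih (by omega))) (ih (by omega))

lemma gbinom_natCast (m k : ℕ) : gbinom (m : ℚ_[p]) k = m.choose k := by
  rw [Nat.cast_choose_eq_descPochhammer_div, descPochhammer_eval_eq_prod_range, gbinom]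

lemma gbinom_mul_gbinom_add (x : ℚ_[p]) (k : ℕ) :
    gbinom x k * gbinom (x + (k : ℚ_[p])) k =
      (∏ i ∈ Finset.range k, (x * (x + 1) - i * (i + 1))) / (k.factorial * k.factorial) := by
  rw [gbinom, gbinom, div_mul_div_comm, ← Finset.prod_range_reflect (fun i ↦ x + (k : ℚ_[p]) - i),
    ← Finset.prod_mul_distrib]
  congr 1
  refine Finset.prod_congr rfl fun i hi ↦ ?_
  rw [Nat.sub_sub, Nat.cast_sub (by have := Finset.mem_range.1 hi; omega)]
  push_cast
  ring

lemma norm_gbinom_le_one {x : ℚ_[p]} (hx : ‖x‖ ≤ 1) {k : ℕ} (hk : k < p) : ‖gbinom x k‖ ≤ 1 := by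
  rw [gbinom, norm_div, norm_factorial_eq_one hk, div_one, norm_prod]
  refine Finset.prod_le_one (fun _ _ ↦ norm_nonneg _) fun i _ ↦ ?_
  exact ultrametric_norm_sub_le hx (IsUltrametricDist.norm_natCast_le_one _ i)

lemma norm_gbinom_mul_gbinom_add_sub_le {x y : ℚ_[p]} (hx : ‖x‖ ≤ 1) (hy : ‖y‖ ≤ 1) {r : ℝ}
    (h : ‖x * (x + 1) - y * (y + 1)‖ ≤ r) {k : ℕ} (hk : k < p) :
    ‖gbinom x k * gbinom (x + (k : ℚ_[p])) k - gbinom y k * gbinom (y + (k : ℚ_[p])) k‖ ≤ r := by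
  have norm_factor_le {z : ℚ_[p]} (hz : ‖z‖ ≤ 1) (i : ℕ) :
      ‖z * (z + 1) - i * (i + 1)‖ ≤ 1 := by
    have hz' : ‖z + 1‖ ≤ 1 := ultrametric_norm_add_le hz norm_one.le
    have hi : ‖(i * (i + 1) : ℚ_[p])‖ ≤ 1 :=
      mod_cast IsUltrametricDist.norm_natCast_le_one ℚ_[p] (i * (i + 1))
    refine ultrametric_norm_sub_le ?_ hi
    simpa using norm_mul_le_of_le hz hz'
  rw [gbinom_mul_gbinom_add, gbinom_mul_gbinom_add, ← sub_div, norm_div, norm_mul,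
    norm_factorial_eq_one hk, mul_one, div_one]
  exact norm_prod_sub_prod_le ((norm_nonneg _).trans h) (fun i _ ↦ norm_factor_le hx i)
    (fun i _ ↦ norm_factor_le hy i) fun i _ ↦ by rwa [sub_sub_sub_cancel_right]

lemma norm_tseq_le_one {x : ℚ_[p]} (hx : ‖x‖ ≤ 1) {n : ℕ} (hn : n < p) : ‖tseq x n‖ ≤ 1 := by
  refine IsUltrametricDist.norm_sum_le_of_forall_le_of_nonneg zero_le_one fun k hk ↦ ?_
  have hkp : k < p := by have := Finset.mem_range.1 hk; omega
  have hxk : ‖x + k‖ ≤ 1 := ultrametric_norm_add_le hx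
    (IsUltrametricDist.norm_natCast_le_one _ k)
  have htwo : ‖(2 ^ k : ℚ_[p])‖ ≤ 1 :=
    mod_cast IsUltrametricDist.norm_natCast_le_one ℚ_[p] (2 ^ k)
  simpa using norm_mul_le_of_le (norm_mul_le_of_le (norm_mul_le_of_le
    (IsUltrametricDist.norm_natCast_le_one _ (n.choose k)) (norm_gbinom_le_one hx hkp))
    (norm_gbinom_le_one hxk hkp)) htwo

lemma norm_tseq_sub_tseq_le {x y : ℚ_[p]} (hx : ‖x‖ ≤ 1) (hy : ‖y‖ ≤ 1) {r : ℝ}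
    (h : ‖x * (x + 1) - y * (y + 1)‖ ≤ r) {n : ℕ} (hn : n < p) :
    ‖tseq x n - tseq y n‖ ≤ r := by
  rw [tseq, tseq, ← Finset.sum_sub_distrib]
  refine IsUltrametricDist.norm_sum_le_of_forall_le_of_nonneg ((norm_nonneg _).trans h)
    fun k hk ↦ ?_
  have hkp : k < p := by have := Finset.mem_range.1 hk; omega
  have hweight : ‖(n.choose k * 2 ^ k : ℚ_[p])‖ ≤ 1 :=
    mod_cast IsUltrametricDist.norm_natCast_le_one ℚ_[p] (n.choose k * 2 ^ k)
  convert norm_mul_le_of_le hweight (norm_gbinom_mul_gbinom_add_sub_le hx hy h hkp) using 1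
  · congr 1
    ring
  · rw [one_mul]

lemma norm_sum_tseq_sq_sub_le {x y : ℚ_[p]} (hx : ‖x‖ ≤ 1) (hy : ‖y‖ ≤ 1) {r : ℝ}
    (h : ‖x * (x + 1) - y * (y + 1)‖ ≤ r) :
    ‖∑ n ∈ Finset.range p, tseq x n ^ 2 - ∑ n ∈ Finset.range p, tseq y n ^ 2‖ ≤ r := by
  rw [← Finset.sum_sub_distrib]
  refine IsUltrametricDist.norm_sum_le_of_forall_le_of_nonneg ((norm_nonneg _).trans h)
    fun n hn ↦ ?_
  have hnp := Finset.mem_range.1 hn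
  exact norm_sq_sub_sq_le (norm_tseq_le_one hx hnp) (norm_tseq_le_one hy hnp)
    (norm_tseq_sub_tseq_le hx hy h hnp)

lemma tseq_natCast (m n : ℕ) :
    tseq (m : ℚ_[p]) n = ∑ k ∈ Finset.range (m + 1), (tCoeff m k * n.choose k : ℚ_[p]) := by
  refine Finset.sum_congr_of_eq_on_inter (fun k _ hk ↦ ?_) (fun k _ hk ↦ ?_) fun k _ _ ↦ ?_
  · rw [gbinom_natCast, m.choose_eq_zero_of_lt (by simpa using hk)]
    simp
  · rw [n.choose_eq_zero_of_lt (by simpa using hk)]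
    simp
  · rw [← Nat.cast_add, gbinom_natCast, gbinom_natCast, tCoeff]
    push_cast
    ring

lemma sum_tseq_natCast_sq (m N : ℕ) :
    ∑ n ∈ Finset.range N, tseq (m : ℚ_[p]) n ^ 2 =
      ∑ k ∈ Finset.range (m + 1), ∑ l ∈ Finset.range (m + 1), (tCoeff m k * tCoeff m l : ℚ_[p]) *
        ∑ n ∈ Finset.range N, (n.choose k * n.choose l : ℚ_[p]) := by
  simp only [tseq_natCast, sq, Finset.sum_mul_sum]
  simp only [Finset.mul_sum]
  rw [Finset.sum_comm]
  refine Finset.sum_congr rfl fun k _ ↦ ?_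
  rw [Finset.sum_comm]
  refine Finset.sum_congr rfl fun l _ ↦ Finset.sum_congr rfl fun n _ ↦ ?_
  ring

lemma norm_sum_tseq_natCast_sq_sub_le {m : ℕ} (hm : p = 2 * m + 1) :
    ‖∑ n ∈ Finset.range p, tseq (m : ℚ_[p]) n ^ 2 - (-1) ^ m‖ ≤ (p : ℝ) ^ (-2 : ℤ) := by
  have hp0 : (2 * m + 1 : ℚ_[p]) ≠ 0 := mod_cast (2 * m).succ_ne_zero
  have main_term : (-1) ^ m = ∑ k ∈ Finset.range (m + 1), ∑ l ∈ Finset.range (m + 1),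
      (tCoeff m k * tCoeff m l : ℚ_[p]) * (p * chooseMoment k l) := by
    have hmoment : ∑ k ∈ Finset.range (m + 1), ∑ l ∈ Finset.range (m + 1),
        (tCoeff m k * tCoeff m l : ℚ_[p]) * chooseMoment k l = (-1) ^ m / (2 * m + 1) :=
      mod_cast congrArg (Rat.cast (K := ℚ_[p])) (sum_tCoeff_mul_chooseMoment m)
    have hcast : (p : ℚ_[p]) = 2 * m + 1 := mod_cast congrArg (Nat.cast (R := ℚ_[p])) hm
    simp only [mul_left_comm _ (p : ℚ_[p]), ← Finset.mul_sum]
    rw [hmoment, hcast, mul_div_cancel₀ _ hp0]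
  rw [sum_tseq_natCast_sq, main_term, ← Finset.sum_sub_distrib]
  have hnonneg : (0 : ℝ) ≤ (p : ℝ) ^ (-2 : ℤ) := by positivity
  refine IsUltrametricDist.norm_sum_le_of_forall_le_of_nonneg hnonneg fun k hk ↦ ?_
  rw [← Finset.sum_sub_distrib]
  refine IsUltrametricDist.norm_sum_le_of_forall_le_of_nonneg hnonneg fun l hl ↦ ?_
  have hkl : k + l < p := by simp only [Finset.mem_range] at hk hl; omega
  have hcoeff : ‖(tCoeff m k * tCoeff m l : ℚ_[p])‖ ≤ 1 :=
    mod_cast IsUltrametricDist.norm_natCast_le_one ℚ_[p] (tCoeff m k * tCoeff m l)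
  rw [← mul_sub]
  simpa using norm_mul_le_of_le hcoeff (norm_sum_choose_mul_choose_sub_le (by omega) hkl)

lemma norm_mul_add_one_sub_le {x : ℚ_[p]} (h2x : ‖2 * x + 1‖ ≤ (p : ℝ)⁻¹) {m : ℕ}
    (hm : p = 2 * m + 1) : ‖x * (x + 1) - m * (m + 1)‖ ≤ (p : ℝ) ^ (-2 : ℤ) := by
  have hcast : (p : ℚ_[p]) = 2 * m + 1 := mod_cast congrArg (Nat.cast (R := ℚ_[p])) hm
  have complete_square : 2 * 2 * (x * (x + 1) - m * (m + 1)) =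
      (2 * x + 1) * (2 * x + 1) - p * p := by
    rw [hcast]
    ring
  have htwo : ‖(2 : ℚ_[p])‖ = 1 := by
    have two_lt : 2 < p := by have := (Fact.out : p.Prime).two_le; omega
    exact mod_cast norm_natCast_eq_one_of_lt two_ne_zero two_lt
  calc ‖x * (x + 1) - m * (m + 1)‖ = ‖(2 * x + 1) * (2 * x + 1) - p * p‖ := by
        rw [← complete_square, norm_mul, norm_mul, htwo, one_mul, one_mul]
    _ ≤ (p : ℝ) ^ (-2 : ℤ) :=
        ultrametric_norm_sub_le (norm_mul_le_zpow_neg_two h2x h2x)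
          (norm_mul_le_zpow_neg_two Padic.norm_p.le Padic.norm_p.le)

end Padic

theorem stmt_14 (p : ℕ) [Fact p.Prime] (hp : p ≠ 2) (x : ℚ_[p]) (hx : ‖x‖ ≤ 1)
    (h2x : ‖2*x + 1‖ ≤ (p : ℝ)⁻¹) :
    ‖(∑ n ∈ Finset.range p, (tseq x n)^2) - (-1)^((p-1)/2)‖ ≤ (p : ℝ) ^ (-2 : ℤ) := by
  obtain ⟨m, hm⟩ := (Fact.out : p.Prime).odd_of_ne_two hp
  have hm_norm : ‖(m : ℚ_[p])‖ ≤ 1 := IsUltrametricDist.norm_natCast_le_one _ m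
  have reduce_to_nat := norm_sum_tseq_sq_sub_le hx hm_norm (norm_mul_add_one_sub_le h2x hm)
  have nat_case := norm_sum_tseq_natCast_sq_sub_le hm
  rw [show (p - 1) / 2 = m by omega, ← sub_add_sub_cancel]
  exact ultrametric_norm_add_le reduce_to_nat nat_case
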